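/- arXiv:2509.16344 — 7 statements merged into one kernel-verified Lean document; each statement's English description precedes it below -/
import Mathlib

section
/- Let d₁ ≥ d₂ ≥ d₃ ≥ ⋯ be a non-increasing sequence of positive real numbers with limₙ dₙ = 0. Then there exists a continuous function f ∈ C[0,1] such that ρ(f, Πₙ) = dₙ for all n ≥ 1, i.e. for every n the distance from f to the space of polynomials of degree at most n (restricted to [0,1], with the supremum norm) equals dₙ. -/
open Metric Filter

/-!
Let `Y 0 < Y 1 < ⋯` be finite-dimensional subspaces of a Banach space. If `d j` vanishes for
`j ≥ m`, a vector with `infDist x (Y j) = d j` is built downwards from `j = m`: adding an element of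
`Y (j + 1)` does not change the distances to `Y (j + 1), Y (j + 2), …`, and moving along a direction
`b ∈ Y (j + 1) \ Y j` makes the distance to `Y j` run continuously from a value at most `d j` to
infinity. For general `d`, truncate after `m` terms. All the vectors so obtained lie in the set
`‖x‖ ≤ d 0`, `infDist x (Y j) ≤ d j`, which is compact because it is bounded and lies arbitrarily
close to finite-dimensional subspaces; a cluster point has all the required distances.
-/

section MetricSpace

variable {α : Type*} [PseudoMetricSpace α]

lemma exists_mem_dist_eq_infDist {s : Set α} [ProperSpace s] (hs : s.Nonempty) (x : α) :
    ∃ y ∈ s, dist x y = infDist x s := by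
  have : Nonempty s := hs.to_subtype
  have hcoercive : Tendsto (fun y : s ↦ dist x y) (cocompact s) atTop := by
    rw [← cobounded_eq_cocompact]
    exact (tendsto_dist_left_cobounded_atTop x).comp
      isometry_subtype_coe.antilipschitz.tendsto_cobounded
  obtain ⟨y, hy⟩ := Continuous.exists_forall_le (by fun_prop) hcoercive
  exact ⟨y, y.2, ((le_infDist hs).2 fun z hz ↦ hy ⟨z, hz⟩).antisymm (infDist_le_dist_of_mem y.2)⟩

lemma totallyBounded_of_isBounded_of_subset_properSpace {s t : Set α} [ProperSpace t]
    (hs : Bornology.IsBounded s) (hst : s ⊆ t) : TotallyBounded s := by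
  have hpre : Bornology.IsBounded ((↑) ⁻¹' s : Set t) :=
    isometry_subtype_coe.antilipschitz.isBounded_preimage hs
  have himage := (hpre.isCompact_closure.totallyBounded.subset subset_closure).image
    uniformContinuous_subtype_val
  rwa [Subtype.image_preimage_coe, Set.inter_eq_right.2 hst] at himage

lemma totallyBounded_of_forall_subset_thickening {s : Set α}
    (h : ∀ ε > 0, ∃ t, TotallyBounded t ∧ s ⊆ thickening ε t) : TotallyBounded s := by
  refine totallyBounded_iff.2 fun ε hε ↦ ?_
  obtain ⟨t, ht, hst⟩ := h (ε / 2) (half_pos hε)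
  obtain ⟨u, hu, htu⟩ := totallyBounded_iff.1 ht (ε / 2) (half_pos hε)
  refine ⟨u, hu, fun x hx ↦ ?_⟩
  obtain ⟨y, hy, hxy⟩ := mem_thickening_iff.1 (hst hx)
  obtain ⟨z, hz, hyz⟩ := Set.mem_iUnion₂.1 (htu hy)
  refine Set.mem_iUnion₂.2 ⟨z, hz, ?_⟩
  rw [mem_ball] at hyz ⊢
  linarith [dist_triangle x y z]

lemma totallyBounded_inter_setOf_infDist_le {ι : Type*} {l : Filter ι} [l.NeBot] {B : Set α}
    (hB : Bornology.IsBounded B) {Y : ι → Set α} [∀ i, ProperSpace (Y i)]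
    (hY : ∀ i, (Y i).Nonempty) {d : ι → ℝ} (hd : Tendsto d l (nhds 0)) :
    TotallyBounded (B ∩ {x | ∀ i, infDist x (Y i) ≤ d i}) := by
  refine totallyBounded_of_forall_subset_thickening fun ε hε ↦ ?_
  obtain ⟨i, hi⟩ := (hd.eventually_lt_const hε).exists
  refine ⟨thickening ε B ∩ Y i, totallyBounded_of_isBounded_of_subset_properSpace
    (hB.thickening.subset Set.inter_subset_left) Set.inter_subset_right, fun x ⟨hxB, hx⟩ ↦ ?_⟩
  obtain ⟨y, hy, hxy⟩ := (infDist_lt_iff (hY i)).1 ((hx i).trans_lt hi)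
  exact mem_thickening_iff.2 ⟨y, ⟨mem_thickening_iff.2 ⟨x, hxB, dist_comm x y ▸ hxy⟩, hy⟩, hxy⟩

lemma isCompact_inter_setOf_infDist_le [CompleteSpace α] {ι : Type*} {l : Filter ι} [l.NeBot]
    {B : Set α} (hB : Bornology.IsBounded B) (hBc : IsClosed B) {Y : ι → Set α}
    [∀ i, ProperSpace (Y i)] (hY : ∀ i, (Y i).Nonempty) {d : ι → ℝ}
    (hd : Tendsto d l (nhds 0)) : IsCompact (B ∩ {x | ∀ i, infDist x (Y i) ≤ d i}) := by
  refine (totallyBounded_inter_setOf_infDist_le hB hY hd).isCompact_of_isClosed (hBc.inter ?_)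
  rw [Set.ofPred_forall]
  exact isClosed_iInter fun i ↦ isClosed_le (continuous_infDist_pt _) continuous_const

end MetricSpace

section Quotient

variable {R E : Type*} [SeminormedAddCommGroup E] [Ring R] [Module R E]

lemma infDist_eq_norm_mkQ (Y : Submodule R E) (x : E) : infDist x Y = ‖Y.mkQ x‖ :=
  (QuotientAddGroup.norm_mk (S := Y.toAddSubgroup) x).symm

lemma infDist_add_of_mem {Y : Submodule R E} {y : E} (hy : y ∈ Y) (x : E) :
    infDist (x + y) Y = infDist x Y := by
  have hy0 : Y.mkQ y = 0 := (Submodule.Quotient.mk_eq_zero Y).2 hy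
  rw [infDist_eq_norm_mkQ, infDist_eq_norm_mkQ, map_add, hy0, add_zero]

end Quotient

lemma exists_norm_add_smul_eq (𝕜 : Type*) {E : Type*} [NontriviallyNormedField 𝕜]
    [PreconnectedSpace 𝕜] [SeminormedAddCommGroup E] [NormedSpace 𝕜 E] {a b : E} {c : ℝ}
    (ha : ‖a‖ ≤ c) (hb : 0 < ‖b‖) : ∃ t : 𝕜, ‖a + t • b‖ = c := by
  obtain ⟨T, hT⟩ := NormedField.exists_lt_norm 𝕜 ((c + ‖a‖) / ‖b‖)
  have hlarge : c ≤ ‖a + T • b‖ := by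
    rw [div_lt_iff₀ hb, ← norm_smul] at hT
    linarith [norm_le_add_norm_add (T • b) a, congrArg norm (add_comm a (T • b))]
  exact mem_range_of_exists_le_of_exists_ge (f := fun t : 𝕜 ↦ ‖a + t • b‖) (by fun_prop)
    ⟨0, by simpa only [zero_smul, add_zero] using ha⟩ ⟨T, hlarge⟩

section FiniteDimensional

variable {𝕜 E : Type*} [RCLike 𝕜] [NormedAddCommGroup E] [NormedSpace 𝕜 E]

lemma exists_mem_norm_add_eq_infDist (Y : Submodule 𝕜 E) [FiniteDimensional 𝕜 Y] (x : E) :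
    ∃ y ∈ Y, ‖x + y‖ = infDist x Y := by
  have : ProperSpace (Y : Set E) := FiniteDimensional.proper 𝕜 Y
  obtain ⟨y, hy, hxy⟩ := exists_mem_dist_eq_infDist (s := Y) ⟨0, Y.zero_mem⟩ x
  exact ⟨-y, Y.neg_mem hy, by rw [← sub_eq_add_neg, ← dist_eq_norm, hxy]⟩

lemma exists_mem_norm_add_eq_and_infDist_add_eq {U V : Submodule 𝕜 E} [FiniteDimensional 𝕜 U]
    (hUV : U < V) {x : E} {r : ℝ} (hx : infDist x U ≤ r) :
    ∃ v ∈ V, ‖x + v‖ = r ∧ infDist (x + v) U = r := by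
  obtain ⟨b, hbV, hbU⟩ := SetLike.exists_of_lt hUV
  have hb : 0 < ‖U.mkQ b‖ := infDist_eq_norm_mkQ U b ▸
    (U.closed_of_finiteDimensional.notMem_iff_infDist_pos ⟨0, U.zero_mem⟩).1 hbU
  obtain ⟨t, ht⟩ := exists_norm_add_smul_eq 𝕜 (infDist_eq_norm_mkQ U x ▸ hx) hb
  rw [← map_smul, ← map_add, ← infDist_eq_norm_mkQ] at ht
  obtain ⟨u, hu, hxu⟩ := exists_mem_norm_add_eq_infDist U (x + t • b)
  refine ⟨t • b + u, V.add_mem (V.smul_mem t hbV) (hUV.le hu), ?_, ?_⟩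
  · rw [← add_assoc, hxu, ht]
  · rw [← add_assoc, infDist_add_of_mem hu, ht]

variable {Y : ℕ → Submodule 𝕜 E} [∀ n, FiniteDimensional 𝕜 (Y n)]

lemma exists_norm_eq_and_forall_infDist_eq_of_eventually_eq_zero (hY : StrictMono Y) {e : ℕ → ℝ}
    (he : Antitone e) (he0 : ∀ᶠ j in atTop, e j = 0) :
    ∃ x : E, ‖x‖ = e 0 ∧ ∀ j, infDist x (Y j) = e j := by
  obtain ⟨N, hN⟩ := eventually_atTop.1 he0
  suffices ∃ x : E, ‖x‖ = e 0 ∧ ∀ j ≥ 0, infDist x (Y j) = e j by simpa using this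
  refine Nat.decreasingInduction (motive := fun k _ ↦ ∃ x : E, ‖x‖ = e k ∧
    ∀ j ≥ k, infDist x (Y j) = e j) ?_ ?_ N.zero_le
  · rintro k - ⟨x, hxnorm, hx⟩
    have hxk : infDist x (Y k) ≤ e k :=
      calc infDist x (Y k) ≤ ‖x‖ := dist_zero_right x ▸ infDist_le_dist_of_mem (Y k).zero_mem
        _ = e (k + 1) := hxnorm
        _ ≤ e k := he k.le_succ
    obtain ⟨v, hv, hnorm, hdist⟩ :=
      exists_mem_norm_add_eq_and_infDist_add_eq (hY k.lt_succ_self) hxk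
    refine ⟨x + v, hnorm, fun j hj ↦ ?_⟩
    obtain rfl | hkj := hj.eq_or_lt
    · exact hdist
    · rw [infDist_add_of_mem (hY.monotone hkj hv), hx j hkj]
  · exact ⟨0, by rw [norm_zero, hN N le_rfl], fun j hj ↦ by
      rw [infDist_zero_of_mem (Y j).zero_mem, hN j hj]⟩

/-- Bernstein's lethargy theorem. -/
theorem exists_forall_infDist_eq [CompleteSpace E] (hY : StrictMono Y) {d : ℕ → ℝ}
    (hanti : Antitone d) (hlim : Tendsto d atTop (nhds 0)) :
    ∃ x : E, ∀ n, infDist x (Y n) = d n := by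
  have hd : ∀ n, 0 ≤ d n := hanti.le_of_tendsto hlim
  have htrunc (m : ℕ) : ∃ x : E, ‖x‖ = (if 0 < m then d 0 else 0) ∧
      ∀ j, infDist x (Y j) = if j < m then d j else 0 := by
    refine exists_norm_eq_and_forall_infDist_eq_of_eventually_eq_zero
      (e := fun j ↦ if j < m then d j else 0) hY ?_ ?_
    · intro i j hij
      grind [hanti hij, hd i]
    · filter_upwards [eventually_ge_atTop m] with j hj using if_neg hj.not_gt
  choose x hxnorm hx using htrunc
  have (n : ℕ) : ProperSpace (Y n : Set E) := FiniteDimensional.proper 𝕜 (Y n)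
  have hcompact : IsCompact (closedBall (0 : E) (d 0) ∩ {x | ∀ n, infDist x (Y n) ≤ d n}) :=
    isCompact_inter_setOf_infDist_le isBounded_closedBall isClosed_closedBall
      (fun n ↦ ⟨0, (Y n).zero_mem⟩) hlim
  have hmem (m : ℕ) : x m ∈ closedBall (0 : E) (d 0) ∩ {x | ∀ n, infDist x (Y n) ≤ d n} := by
    refine ⟨mem_closedBall_zero_iff.2 ?_, fun n ↦ ?_⟩
    · rw [hxnorm]; split_ifs; exacts [le_rfl, hd 0]
    · rw [hx]; split_ifs; exacts [le_rfl, hd n]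
  obtain ⟨a, -, φ, hφ, hφa⟩ := hcompact.tendsto_subseq hmem
  refine ⟨a, fun n ↦ tendsto_nhds_unique
    (((continuous_infDist_pt (Y n : Set E)).tendsto a).comp hφa) ?_⟩
  refine tendsto_nhds_of_eventually_eq ?_
  filter_upwards [hφ.tendsto_atTop.eventually_gt_atTop n] with m hm
  exact (hx (φ m) n).trans (if_pos hm)

end FiniteDimensional

section Polynomial

open Polynomial

lemma strictMono_degreeLT (R : Type*) [Semiring R] [Nontrivial R] : StrictMono (degreeLT R) := by
  refine strictMono_nat_of_lt_succ fun n ↦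
    SetLike.lt_iff_le_and_exists.2 ⟨degreeLT_mono n.le_succ, X ^ n, ?_, ?_⟩
  · exact mem_degreeLT.2 ((degree_X_pow n).trans_lt (by exact_mod_cast n.lt_succ_self))
  · exact fun h ↦ (mem_degreeLT.1 h).ne (degree_X_pow n)

section CommSemiring

variable {R : Type*} [CommSemiring R] [TopologicalSpace R] [IsTopologicalSemiring R]

/-- The space of restrictions to `s` of polynomials of degree less than `n`, as a submodule of the
continuous functions on `s`; the paper's `Πₙ` is `polynomialsDegreeLT (Set.Icc 0 1) (n + 1)`. -/
noncomputable def polynomialsDegreeLT (s : Set R) (n : ℕ) : Submodule R C(s, R) :=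
  (degreeLT R n).map (toContinuousMapOnAlgHom s).toLinearMap

instance (s : Set R) (n : ℕ) : Module.Finite R (polynomialsDegreeLT s n) :=
  Module.Finite.map _ _

lemma coe_polynomialsDegreeLT_succ (s : Set R) (n : ℕ) :
    (polynomialsDegreeLT s (n + 1) : Set C(s, R)) =
      {g | ∃ p : R[X], p.natDegree ≤ n ∧ ∀ x : s, g x = p.eval ↑x} := by
  ext g
  rw [polynomialsDegreeLT, degreeLT_succ_eq_degreeLE, SetLike.mem_coe, Submodule.mem_map]
  simp only [mem_degreeLE, ← natDegree_le_iff_degree_le, ContinuousMap.ext_iff]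
  exact exists_congr fun p ↦ and_congr_right fun _ ↦ forall_congr' fun x ↦ eq_comm

end CommSemiring

section IsDomain

variable {R : Type*} [CommRing R] [IsDomain R] [TopologicalSpace R] [IsTopologicalSemiring R]
  {s : Set R}

lemma toContinuousMapOnAlgHom_injective (hs : s.Infinite) :
    Function.Injective (toContinuousMapOnAlgHom s) := by
  refine fun p q hpq ↦ eq_of_infinite_eval_eq p q (hs.mono fun x hx ↦ ?_)
  exact DFunLike.congr_fun hpq (⟨x, hx⟩ : s)

lemma strictMono_polynomialsDegreeLT (hs : s.Infinite) : StrictMono (polynomialsDegreeLT s) :=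
  (Submodule.map_strictMono_of_injective (toContinuousMapOnAlgHom_injective hs)).comp
    (strictMono_degreeLT R)

end IsDomain

end Polynomial

theorem stmt_0_general {𝕜 : Type*} [RCLike 𝕜] {s : Set 𝕜} [CompactSpace s] (hs : s.Infinite)
    {d : ℕ → ℝ} (hanti : Antitone d) (hlim : Tendsto d atTop (nhds 0)) :
    ∃ f : C(s, 𝕜), ∀ n, infDist f {g : C(s, 𝕜) |
      ∃ p : Polynomial 𝕜, p.natDegree ≤ n ∧ ∀ x : s, g x = p.eval ↑x} = d n := by
  have hmono : StrictMono fun n ↦ polynomialsDegreeLT s (n + 1) :=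
    (strictMono_polynomialsDegreeLT hs).comp (strictMono_id.add_const 1)
  simpa only [coe_polynomialsDegreeLT_succ] using exists_forall_infDist_eq hmono hanti hlim

/-- Bernstein's Lethargy Theorem in `C[0,1]`: for any non-increasing sequence of positive
numbers tending to `0`, there is a continuous function whose distance to the space of
polynomials of degree at most `n` equals `d n` for every `n ≥ 1`. -/
theorem stmt_0 (d : ℕ → ℝ) (hpos : ∀ n, 0 < d n) (hanti : Antitone d)
    (hlim : Tendsto d atTop (nhds 0)) :
    ∃ f : C(Set.Icc (0:ℝ) 1, ℝ), ∀ n, 1 ≤ n →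
      infDist f {g : C(Set.Icc (0:ℝ) 1, ℝ) |
        ∃ p : Polynomial ℝ, p.natDegree ≤ n ∧ ∀ x : Set.Icc (0:ℝ) 1, g x = p.eval ↑x} = d n := by
  obtain ⟨f, hf⟩ := stmt_0_general (Set.Icc_infinite (zero_lt_one' ℝ)) hanti hlim
  exact ⟨f, fun n _ ↦ hf n⟩
end

section
/- Let (X, ‖·‖) be an infinite-dimensional Banach space and let Y₁ ⊂ Y₂ ⊂ ⋯ be a sequence of closed subspaces of X with Yₙ ≠ Yₙ₊₁ and Yₙ ≠ X for all n. Then for every sequence {dₙ} of non-negative real numbers converging to 0 there exists x ∈ X such that ρ(x, Yₙ) is not O(dₙ) as n → ∞; that is, for every constant C > 0 there exist infinitely many n with ρ(x, Yₙ) > C·dₙ. -/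
open Metric Filter

/-!
If `ρ(x, Yₙ) = O(dₙ)` for every `x`, Baire's theorem gives a ball `B(x, r)` and a single constant
`C` with `ρ(w, Yₙ) ≤ C |dₙ|` for all `w ∈ B(x, r)` and all large `n`. Each nonzero quotient `X ⧸ Yₙ`
contains a vector whose norm is comparable to `r`, and it lifts to some `z` with `‖z‖ < r`; thus
`δ ≤ ρ(z, Yₙ) ≤ ρ(x + z, Yₙ) + ρ(x, Yₙ) ≤ 2 C |dₙ|` with `δ > 0` independent of `n`, which is
absurd as soon as `|dₙ|` is small.
-/

open Asymptotics Topology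

theorem not_isBigO_iff_forall_frequently_lt {ι E F : Type*} [Norm E] [Norm F] {l : Filter ι}
    {f : ι → E} {g : ι → F} : ¬ f =O[l] g ↔ ∀ C : ℝ, ∃ᶠ i in l, C * ‖g i‖ < ‖f i‖ := by
  simp only [isBigO_iff, not_exists, not_eventually, not_le]

theorem exists_isOpen_eventually_forall_norm_le_of_forall_isBigO {ι X E F : Type*}
    [TopologicalSpace X] [BaireSpace X] [Nonempty X] [SeminormedAddGroup E] [SeminormedAddGroup F]
    {l : Filter ι} [l.IsCountablyGenerated] {f : ι → X → E} {g : ι → F}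
    (hf : ∀ i, Continuous (f i)) (hfg : ∀ x, (f · x) =O[l] g) :
    ∃ U : Set X, IsOpen U ∧ U.Nonempty ∧ ∃ C : ℝ, ∀ᶠ i in l, ∀ x ∈ U, ‖f i x‖ ≤ C * ‖g i‖ := by
  obtain ⟨b, hb⟩ := l.exists_antitone_basis
  let A (k : ℕ) : Set X := {x | ∀ i ∈ b k, ‖f i x‖ ≤ k * ‖g i‖}
  have hA_closed (k : ℕ) : IsClosed (A k) := by
    simp only [A, Set.ofPred_forall]
    exact isClosed_biInter fun i _ ↦ isClosed_le (hf i).norm continuous_const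
  have hA_cover : ⋃ k, A k = Set.univ := by
    refine Set.eq_univ_of_forall fun x ↦ Set.mem_iUnion.2 ?_
    obtain ⟨C, hC⟩ := (hfg x).bound
    obtain ⟨m, hm⟩ := hb.mem_iff.1 hC
    obtain ⟨k, hk⟩ := exists_nat_ge C
    refine ⟨max m k, fun i hi ↦ (hm (hb.antitone (le_max_left m k) hi)).trans ?_⟩
    gcongr
    exact hk.trans (mod_cast le_max_right m k)
  obtain ⟨k, hk⟩ := nonempty_interior_of_iUnion_of_closed hA_closed hA_cover
  exact ⟨interior (A k), isOpen_interior, hk, k,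
    mem_of_superset (hb.mem k) fun i hi x hx ↦ interior_subset hx i hi⟩

theorem infDist_sub_le_add {X : Type*} [SeminormedAddCommGroup X] (S : AddSubgroup X) (x y : X) :
    infDist (x - y) (S : Set X) ≤ infDist x S + infDist y S := by
  simpa only [← QuotientAddGroup.norm_mk, QuotientAddGroup.mk_sub]
    using norm_sub_le (x : X ⧸ S) (y : X ⧸ S)

theorem exists_pos_forall_not_dense_exists_le_infDist (𝕜 X : Type*) [NontriviallyNormedField 𝕜]
    [SeminormedAddCommGroup X] [NormedSpace 𝕜 X] {r : ℝ} (hr : 0 < r) :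
    ∃ δ > 0, ∀ Y : Submodule 𝕜 X, ¬ Dense (Y : Set X) → ∃ z : X, ‖z‖ < r ∧ δ ≤ infDist z Y := by
  obtain ⟨c, hc⟩ := NormedField.exists_one_lt_norm 𝕜
  refine ⟨r / ‖c‖, by positivity, fun Y hY ↦ ?_⟩
  obtain ⟨v, hv⟩ : ∃ v, v ∉ closure (Y : Set X) := not_forall.1 hY
  have hv_norm : ‖Y.mkQ v‖ ≠ 0 := mt QuotientAddGroup.norm_mk_eq_zero_iff_mem_closure.1 hv
  obtain ⟨a, -, ha_lt, ha_ge, -⟩ := rescale_to_shell_semi_normed hc hr hv_norm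
  obtain ⟨z, hz_mk, hz_lt⟩ := QuotientAddGroup.norm_lt_iff.1 ha_lt
  refine ⟨z, hz_lt, ha_ge.trans_eq ?_⟩
  rw [← hz_mk]
  exact QuotientAddGroup.norm_mk z

theorem stmt_1_general {𝕜 X ι : Type*} [NontriviallyNormedField 𝕜] [SeminormedAddCommGroup X]
    [NormedSpace 𝕜 X] [CompleteSpace X] {l : Filter ι} [l.IsCountablyGenerated]
    (Y : ι → Submodule 𝕜 X) (hY : ∀ i, ¬ Dense (Y i : Set X))
    (d : ι → ℝ) (hd : MapClusterPt 0 l d) :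
    ∃ x : X, ¬ (fun i ↦ infDist x (Y i)) =O[l] d := by
  by_contra! hO
  obtain ⟨U, hU, ⟨x, hx⟩, C, hC⟩ := exists_isOpen_eventually_forall_norm_le_of_forall_isBigO
    (fun i ↦ continuous_infDist_pt (Y i : Set X)) hO
  obtain ⟨r, hr, hball⟩ := Metric.isOpen_iff.1 hU x hx
  obtain ⟨δ, hδ, hfar⟩ := exists_pos_forall_not_dense_exists_le_infDist 𝕜 X hr
  have hsmall : ∀ᶠ t : ℝ in 𝓝 0, 2 * (C * ‖t‖) < δ :=
    (by fun_prop : Continuous fun t : ℝ ↦ 2 * (C * ‖t‖)).tendsto' 0 0 (by simp)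
      |>.eventually_lt_const hδ
  obtain ⟨i, hi_small, hi⟩ := ((hd.frequently hsmall).and_eventually hC).exists
  have hdist : ∀ w ∈ U, infDist w (Y i) ≤ C * ‖d i‖ := fun w hw ↦ (le_abs_self _).trans (hi w hw)
  obtain ⟨z, hz, hδz⟩ := hfar (Y i) (hY i)
  have hxz : x + z ∈ U := hball (by simpa using hz)
  have hz_le : infDist z (Y i) ≤ infDist (x + z) (Y i) + infDist x (Y i) := by
    simpa using infDist_sub_le_add (Y i).toAddSubgroup (x + z) x
  linarith [hdist _ hxz, hdist x hx]

/-- Shapiro's theorem: in an infinite-dimensional Banach space, for strictly nested closed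
proper subspaces and any null sequence of non-negative numbers `d`, there is `x` whose
sequence of best-approximation errors is not `O(d n)`. -/
theorem stmt_1 (X : Type*) [NormedAddCommGroup X] [NormedSpace ℝ X] [CompleteSpace X]
    (hinf : ¬ FiniteDimensional ℝ X)
    (Y : ℕ → Submodule ℝ X) (hclosed : ∀ n, IsClosed (Y n : Set X))
    (hnested : ∀ n, Y n < Y (n + 1)) (hproper : ∀ n, Y n ≠ ⊤)
    (d : ℕ → ℝ) (hd : ∀ n, 0 ≤ d n) (hlim : Tendsto d atTop (nhds 0)) :
    ∃ x : X, ∀ C : ℝ, 0 < C → ∀ N : ℕ, ∃ n ≥ N, C * d n < infDist x (Y n : Set X) := by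
  have not_dense (n : ℕ) : ¬ Dense (Y n : Set X) := fun hn ↦
    hproper n <| SetLike.coe_injective <| (hclosed n).closure_eq ▸ hn.closure_eq
  obtain ⟨x, hx⟩ := stmt_1_general Y not_dense d hlim.mapClusterPt
  exact ⟨x, fun C _ ↦ frequently_atTop.1 <| by
    simpa only [Real.norm_of_nonneg (hd _), Real.norm_of_nonneg infDist_nonneg]
      using not_isBigO_iff_forall_frequently_lt.1 hx C⟩
end

section
/- Let X be a Banach space and let Y₁ ⊂ Y₂ ⊂ ⋯ be a strictly increasing sequence of closed proper subspaces of X whose union ⋃ₙ Yₙ is dense in X. Then for every sequence {dₙ} of positive real numbers converging to 0 there exists an element x ∈ X such that limₙ→∞ ρ(x, Yₙ) = 0 and ρ(x, Yₙ) ≥ dₙ for all n ≥ 1. -/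
open Metric Filter

/-!
Refine `Y` to a strictly increasing subsequence `Z k = Y (φ k)`, pick by Riesz's lemma
`u k ∈ Z (k + 1)` of bounded norm at distance at least `1` from `Z k`, and put
`x = ∑ j, q ^ j • u j` with `‖q‖` small. Modulo `Z k` the terms before the `k`-th vanish and the
terms after it are dominated by it, so `ρ(x, Z k)` is bounded below by a geometric sequence whose
ratio does not depend on `φ`. Choosing `φ` sparse enough, `d` lies below the next value of this
geometric sequence from `φ k` on; monotonicity of `n ↦ ρ(x, Y n)` then covers the gaps.
-/

section Order

lemma exists_strictMono_comp_of_eventually {α : Type*} [Preorder α] {Y : ℕ → α}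
    (hY : Monotone Y) (hlt : ∀ m, ∃ n, Y m < Y n) {P : ℕ → ℕ → Prop}
    (hP : ∀ k, ∀ᶠ n in atTop, P k n) :
    ∃ φ : ℕ → ℕ, StrictMono (Y ∘ φ) ∧ ∀ k, P k (φ k) := by
  choose g hg using hlt
  choose N hN using fun k => eventually_atTop.1 (hP k)
  let φ : ℕ → ℕ := fun k => Nat.rec (N 0) (fun k m => max (g m) (N (k + 1))) k
  have N_le_φ : ∀ k, N k ≤ φ k := by
    rintro (_ | k)
    exacts [le_rfl, le_max_right _ _]
  exact ⟨φ, strictMono_nat_of_lt_succ fun k => (hg (φ k)).trans_le (hY (le_max_left _ _)),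
    fun k => hN k _ (N_le_φ k)⟩

lemma forall_le_of_forall_ge_le_succ {α : Type*} [Preorder α] {d b e : ℕ → α} {φ : ℕ → ℕ}
    (hφ : ∀ n, ∃ k, n ≤ φ k) (he : Antitone e) (hbe : ∀ k, b k ≤ e (φ k))
    (hd_zero : ∀ n, d n ≤ b 0) (hd_succ : ∀ k, ∀ n ≥ φ k, d n ≤ b (k + 1)) (n : ℕ) : d n ≤ e n := by
  obtain ⟨k, hnk, hdk⟩ : ∃ k, n ≤ φ k ∧ d n ≤ b k := by
    classical
    refine ⟨Nat.find (hφ n), Nat.find_spec (hφ n), ?_⟩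
    rcases hfind : Nat.find (hφ n) with _ | k
    · exact hd_zero n
    · exact hd_succ k n (not_le.1 (Nat.find_min (hφ n) (by lia))).le
  exact hdk.trans ((hbe k).trans (he hnk))

end Order

lemma tendsto_infDist_zero_of_monotone_of_dense_iUnion {α ι : Type*} [PseudoMetricSpace α]
    [Preorder ι] {s : ι → Set α} (hs : Monotone s) (hdense : Dense (⋃ i, s i)) (x : α) :
    Tendsto (fun i => infDist x (s i)) atTop (nhds 0) := by
  refine nhds_basis_ball.tendsto_right_iff.2 fun ε hε => ?_
  obtain ⟨y, hy, hxy⟩ := hdense.exists_dist_lt x hε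
  obtain ⟨i, hyi⟩ := Set.mem_iUnion.1 hy
  filter_upwards [eventually_ge_atTop i] with j hij
  rw [mem_ball_zero_iff, Real.norm_of_nonneg infDist_nonneg]
  exact (infDist_le_dist_of_mem (hs hij hyi)).trans_lt hxy

lemma exists_lt_of_monotone_of_dense_iUnion {R E ι : Type*} [Semiring R] [AddCommMonoid E]
    [Module R E] [TopologicalSpace E] [SemilatticeSup ι] {Y : ι → Submodule R E}
    (hY : Monotone Y) (hdense : Dense (⋃ i, (Y i : Set E))) {i : ι}
    (hclosed : IsClosed (Y i : Set E)) (hproper : Y i ≠ ⊤) : ∃ j, Y i < Y j := by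
  by_contra! hmax
  have hle : ∀ j, Y j ≤ Y i := fun j =>
    (hY le_sup_right).trans (not_lt_iff_le_imp_ge.1 (hmax (i ⊔ j)) (hY le_sup_left))
  have hdense_i : Dense (Y i : Set E) := hdense.mono (Set.iUnion_subset hle)
  exact hproper (SetLike.coe_injective (hclosed.closure_eq.symm.trans hdense_i.closure_eq))

section Quotient

variable {R E : Type*} [Ring R] [SeminormedAddCommGroup E] [Module R E]

lemma norm_mkQ_eq_infDist (F : Submodule R E) (x : E) : ‖F.mkQ x‖ = infDist x (F : Set E) :=
  QuotientAddGroup.norm_mk (S := F.toAddSubgroup) x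

lemma antitone_infDist_of_monotone {ι : Type*} [Preorder ι] {Y : ι → Submodule R E}
    (hY : Monotone Y) (x : E) : Antitone fun i => infDist x (Y i : Set E) :=
  fun i _ hij => infDist_le_infDist_of_subset (hY hij) (Y i).nonempty

end Quotient

lemma infDist_sub_norm_tsum_le_infDist_tsum {R E : Type*} [Ring R] [NormedAddCommGroup E]
    [Module R E] {F : Submodule R E} {f : ℕ → E} (hf : Summable f) {k : ℕ}
    (hmem : ∀ j < k, f j ∈ F) :
    infDist (f k) (F : Set E) - ‖∑' i, f (i + (k + 1))‖ ≤ infDist (∑' j, f j) (F : Set E) := by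
  set t := ∑' i, f (i + (k + 1))
  have hhead : F.mkQ (∑ j ∈ Finset.range k, f j) = 0 :=
    (Submodule.Quotient.mk_eq_zero F).2
      (F.sum_mem fun j hj => hmem j (Finset.mem_range.1 hj))
  have hsplit : F.mkQ (∑' j, f j) = F.mkQ (f k) + F.mkQ t := by
    rw [← hf.sum_add_tsum_nat_add (k + 1), Finset.sum_range_succ, map_add, map_add, hhead, zero_add]
  calc infDist (f k) (F : Set E) - ‖t‖ ≤ ‖F.mkQ (f k)‖ - ‖F.mkQ t‖ := by
        rw [norm_mkQ_eq_infDist]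
        gcongr
        exact Submodule.Quotient.norm_mk_le F t
    _ ≤ ‖F.mkQ (f k) + F.mkQ t‖ := norm_sub_le_norm_add _ _
    _ = infDist (∑' j, f j) (F : Set E) := by rw [← hsplit, norm_mkQ_eq_infDist]

section SeminormedSpace

variable {𝕜 E : Type*} [NormedField 𝕜] [SeminormedAddCommGroup E] [NormedSpace 𝕜 E]

lemma infDist_smul_submodule (F : Submodule 𝕜 E) (a : 𝕜) (x : E) :
    infDist (a • x) (F : Set E) = ‖a‖ * infDist x (F : Set E) := by
  rw [← norm_mkQ_eq_infDist, map_smul, norm_smul, norm_mkQ_eq_infDist]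

variable {q : 𝕜} {u : ℕ → E} {R : ℝ}

lemma norm_pow_smul_le (hu : ∀ j, ‖u j‖ ≤ R) (j : ℕ) : ‖q ^ j • u j‖ ≤ ‖q‖ ^ j * R := by
  rw [norm_smul, norm_pow]
  gcongr
  exact hu j

lemma summable_pow_smul_of_norm_le [CompleteSpace E] (hq : ‖q‖ < 1) (hu : ∀ j, ‖u j‖ ≤ R) :
    Summable fun j => q ^ j • u j :=
  .of_norm_bounded ((summable_geometric_of_lt_one (norm_nonneg q) hq).mul_right R)
    (norm_pow_smul_le hu)

lemma norm_tsum_pow_smul_nat_add_le (hq : ‖q‖ < 1) (hu : ∀ j, ‖u j‖ ≤ R) (n : ℕ) :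
    ‖∑' i, q ^ (i + n) • u (i + n)‖ ≤ (1 - ‖q‖)⁻¹ * (‖q‖ ^ n * R) :=
  tsum_of_norm_bounded ((hasSum_geometric_of_lt_one (norm_nonneg q) hq).mul_right _) fun i =>
    (norm_pow_smul_le hu (i + n)).trans_eq (by ring)

end SeminormedSpace

section NormedSpace

variable {𝕜 E : Type*} [NormedField 𝕜] [NormedAddCommGroup E] [NormedSpace 𝕜 E]

lemma exists_mem_norm_le_one_le_infDist_of_lt {c : 𝕜} (hc : 1 < ‖c‖) {R : ℝ} (hR : ‖c‖ < R)
    {F G : Submodule 𝕜 E} (hF : IsClosed (F : Set E)) (hFG : F < G) :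
    ∃ u ∈ G, ‖u‖ ≤ R ∧ 1 ≤ infDist u (F : Set E) := by
  obtain ⟨hle, v, hvG, hvF⟩ := SetLike.lt_iff_le_and_exists.1 hFG
  have hclosed : IsClosed (F.comap G.subtype : Set G) := hF.preimage continuous_subtype_val
  obtain ⟨u, hu_norm, hu⟩ := riesz_lemma_of_norm_lt hc hR hclosed ⟨⟨v, hvG⟩, hvF⟩
  refine ⟨u, u.2, hu_norm, (le_infDist F.nonempty).2 fun y hy => ?_⟩
  rw [dist_eq_norm]
  exact hu ⟨y, hle hy⟩ hy

lemma half_norm_pow_le_infDist_tsum_pow_smul [CompleteSpace E] {q : 𝕜} {u : ℕ → E} {R : ℝ}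
    {Z : ℕ → Submodule 𝕜 E} (hZ : Monotone Z) (hu_mem : ∀ j, u j ∈ Z (j + 1))
    (hu_norm : ∀ j, ‖u j‖ ≤ R) (hu_dist : ∀ j, 1 ≤ infDist (u j) (Z j : Set E))
    (hq : ‖q‖ < 1) (hqR : 2 * R * ‖q‖ ≤ 1 - ‖q‖) (k : ℕ) :
    ‖q‖ ^ k / 2 ≤ infDist (∑' j, q ^ j • u j) (Z k : Set E) := by
  have hsum : Summable fun j => q ^ j • u j := summable_pow_smul_of_norm_le hq hu_norm
  have hhead : ∀ j < k, q ^ j • u j ∈ Z k := fun j hj =>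
    (Z k).smul_mem _ (hZ (Nat.succ_le_of_lt hj) (hu_mem j))
  have hterm : ‖q‖ ^ k ≤ infDist (q ^ k • u k) (Z k : Set E) := by
    rw [infDist_smul_submodule, norm_pow]
    exact le_mul_of_one_le_right (by positivity) (hu_dist k)
  have htail : ‖∑' i, q ^ (i + (k + 1)) • u (i + (k + 1))‖ ≤ ‖q‖ ^ k / 2 := by
    refine (norm_tsum_pow_smul_nat_add_le hq hu_norm (k + 1)).trans ?_
    rw [inv_mul_le_iff₀ (sub_pos.2 hq), pow_succ]
    linarith [mul_le_mul_of_nonneg_left hqR (pow_nonneg (norm_nonneg q) k)]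
  calc ‖q‖ ^ k / 2 = ‖q‖ ^ k - ‖q‖ ^ k / 2 := (sub_half _).symm
    _ ≤ infDist (q ^ k • u k) (Z k : Set E) - ‖∑' i, q ^ (i + (k + 1)) • u (i + (k + 1))‖ :=
        sub_le_sub hterm htail
    _ ≤ infDist (∑' j, q ^ j • u j) (Z k : Set E) :=
        infDist_sub_norm_tsum_le_infDist_tsum hsum hhead

end NormedSpace

lemma exists_ratio_forall_strictMono_mul_pow_le_infDist (𝕜 E : Type*) [NontriviallyNormedField 𝕜]
    [NormedAddCommGroup E] [NormedSpace 𝕜 E] [CompleteSpace E] :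
    ∃ r : ℝ, 0 < r ∧ ∀ Z : ℕ → Submodule 𝕜 E, (∀ k, IsClosed (Z k : Set E)) → StrictMono Z →
      ∀ C : ℝ, ∃ x : E, ∀ k, C * r ^ k ≤ infDist x (Z k : Set E) := by
  obtain ⟨c, hc⟩ := NormedField.exists_one_lt_norm 𝕜
  obtain ⟨R, hR⟩ := exists_gt ‖c‖
  have hR_pos : 0 < 2 * R + 1 := by linarith
  obtain ⟨q, hq_pos, hq⟩ := NormedField.exists_norm_lt 𝕜 (one_div_pos.2 hR_pos)
  have hqR : ‖q‖ * (2 * R + 1) < 1 := (lt_div_iff₀ hR_pos).1 hq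
  have hq_lt_one : ‖q‖ < 1 := hq.trans ((div_lt_one hR_pos).2 (by linarith))
  refine ⟨‖q‖, hq_pos, fun Z hclosed hZ C => ?_⟩
  choose u hu_mem hu_norm hu_dist using fun k =>
    exists_mem_norm_le_one_le_infDist_of_lt hc hR (hclosed k) (hZ k.lt_succ_self)
  obtain ⟨a, ha⟩ := NormedField.exists_lt_norm 𝕜 (2 * C)
  refine ⟨a • ∑' j, q ^ j • u j, fun k => ?_⟩
  calc C * ‖q‖ ^ k ≤ ‖a‖ * (‖q‖ ^ k / 2) := by
        linarith [mul_le_mul_of_nonneg_right ha.le (pow_nonneg hq_pos.le k)]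
    _ ≤ ‖a‖ * infDist (∑' j, q ^ j • u j) (Z k : Set E) := by
        gcongr
        exact half_norm_pow_le_infDist_tsum_pow_smul hZ.monotone hu_mem hu_norm hu_dist hq_lt_one
          (by linarith) k
    _ = infDist (a • ∑' j, q ^ j • u j) (Z k : Set E) := (infDist_smul_submodule _ _ _).symm

theorem stmt_2_general {𝕜 X : Type*} [NontriviallyNormedField 𝕜] [NormedAddCommGroup X]
    [NormedSpace 𝕜 X] [CompleteSpace X] {Y : ℕ → Submodule 𝕜 X}
    (hclosed : ∀ n, IsClosed (Y n : Set X)) (hmono : Monotone Y) (hproper : ∀ n, Y n ≠ ⊤)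
    (hdense : Dense (⋃ n, (Y n : Set X))) {d : ℕ → ℝ} (hlim : Tendsto d atTop (nhds 0)) :
    ∃ x : X, Tendsto (fun n => infDist x (Y n : Set X)) atTop (nhds 0) ∧
      ∀ n, d n ≤ infDist x (Y n : Set X) := by
  obtain ⟨r, hr, hlower⟩ := exists_ratio_forall_strictMono_mul_pow_le_infDist 𝕜 X
  obtain ⟨C, hC, hdC⟩ := hlim.bddAbove_range.exists_ge 1
  have hC_pos : 0 < C := zero_lt_one.trans_le hC
  have hd_eventually : ∀ k, ∀ᶠ N in atTop, ∀ n ≥ N, d n ≤ C * r ^ (k + 1) := fun k =>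
    eventually_forall_ge_atTop.2 (hlim.eventually_le_const (mul_pos hC_pos (pow_pos hr (k + 1))))
  obtain ⟨φ, hYφ, hdφ⟩ := exists_strictMono_comp_of_eventually hmono
    (fun n => exists_lt_of_monotone_of_dense_iUnion hmono hdense (hclosed n) (hproper n))
    hd_eventually
  obtain ⟨x, hx⟩ := hlower (Y ∘ φ) (fun k => hclosed (φ k)) hYφ C
  have hφ : StrictMono φ := fun _ _ hij => hmono.reflect_lt (hYφ hij)
  exact ⟨x, tendsto_infDist_zero_of_monotone_of_dense_iUnion hmono hdense x,
    forall_le_of_forall_ge_le_succ (fun n => ⟨n, hφ.le_apply⟩)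
      (antitone_infDist_of_monotone hmono x) hx
      (fun n => by simpa using hdC (d n) ⟨n, rfl⟩) hdφ⟩

/-- Tyuriemskih's theorem: for a strictly increasing sequence of closed proper subspaces
with dense union, and any positive null sequence `d`, there is `x` with
`ρ(x, Yₙ) → 0` and `ρ(x, Yₙ) ≥ dₙ` for all `n`. -/
theorem stmt_2 (X : Type*) [NormedAddCommGroup X] [NormedSpace ℝ X] [CompleteSpace X]
    (Y : ℕ → Submodule ℝ X) (hclosed : ∀ n, IsClosed (Y n : Set X))
    (hnested : ∀ n, Y n < Y (n + 1)) (hproper : ∀ n, Y n ≠ ⊤)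
    (hdense : Dense (⋃ n, (Y n : Set X)))
    (d : ℕ → ℝ) (hd : ∀ n, 0 < d n) (hlim : Tendsto d atTop (nhds 0)) :
    ∃ x : X, Tendsto (fun n => infDist x (Y n : Set X)) atTop (nhds 0) ∧
      ∀ n, d n ≤ infDist x (Y n : Set X) :=
  stmt_2_general hclosed (strictMono_nat_of_lt_succ hnested).monotone hproper hdense hlim
end

section
/- Let X be an infinite-dimensional Banach space, let d₀ ≥ d₁ ≥ d₂ ≥ ⋯ > 0 be a non-increasing sequence of positive real numbers converging to 0, and let Y₁ ⊂ Y₂ ⊂ ⋯ ⊂ X be a system of strictly nested subspaces of X for which there exists a sequence of non-zero elements {qₙ} with qₙ ∈ Yₙ₊₁ \ Yₙ such that for every k ≥ 1 and every non-zero element q of the linear span of {q_k, q_{k+1}, …} one has ‖q‖ ≤ (d_{k−1}/d_k)·ρ(q, Y_k). Then there exists an element x in the closed linear span of {q₁, q₂, …} satisfying ρ(x, Yₙ) = dₙ for all n ≥ 1. -/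
open Metric Filter

/-!
For each `k`, a vector `p` with `ρ(p, Y n) = d (n + 1)` for all `n < k` is built by downward
recursion on `j ≤ k`: starting from `0`, add a multiple of `q j` chosen by the intermediate value
theorem so that the distance to `Y j` becomes `d (j + 1)`. This leaves the distances to `Y n`,
`n > j`, unchanged since `q j ∈ Y n`, and the hypothesis bounds the new norm by `d j`, which is
exactly what the next step needs. The multiples need not stabilise as `k` grows, so the vectors need
not converge; but stopping the recursion at `n` leaves a tail of norm at most `d n`, so each of them
is within `d n` of the span of `q 0, …, q (n - 1)`. As `d n → 0`, they form a totally bounded set,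
and any cluster point of the sequence is the required vector.
-/

section Distance

lemma norm_mkQ_eq_infDist_s6 {R M : Type*} [Ring R] [SeminormedAddCommGroup M] [Module R M]
    (S : Submodule R M) (x : M) : ‖S.mkQ x‖ = infDist x (S : Set M) :=
  QuotientAddGroup.norm_mk (S := S.toAddSubgroup) x

lemma infDist_add_of_mem_s6 {R M : Type*} [Ring R] [SeminormedAddCommGroup M] [Module R M]
    {S : Submodule R M} {y : M} (hy : y ∈ S) (x : M) :
    infDist (x + y) (S : Set M) = infDist x (S : Set M) := by
  have hy₀ : S.mkQ y = 0 := (Submodule.Quotient.mk_eq_zero S).2 hy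
  rw [← norm_mkQ_eq_infDist_s6, ← norm_mkQ_eq_infDist_s6, map_add, hy₀, add_zero]

variable {E : Type*} [SeminormedAddCommGroup E] [NormedSpace ℝ E]

lemma exists_norm_add_smul_eq_s6 {p q : E} {c : ℝ} (hp : ‖p‖ ≤ c) (hq : 0 < ‖q‖) :
    ∃ a : ℝ, ‖p + a • q‖ = c := by
  have hc : 0 ≤ c := (norm_nonneg p).trans hp
  have hA : 0 ≤ 2 * c / ‖q‖ := by positivity
  have hlarge : c ≤ ‖p + (2 * c / ‖q‖) • q‖ := by
    have hsmul : ‖(2 * c / ‖q‖) • q‖ = 2 * c := by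
      rw [norm_smul, Real.norm_of_nonneg hA, div_mul_cancel₀ _ hq.ne']
    linarith [norm_le_add_norm_add' p ((2 * c / ‖q‖) • q)]
  have hcont : Continuous fun a : ℝ => ‖p + a • q‖ := by fun_prop
  obtain ⟨a, -, ha⟩ := intermediate_value_Icc hA hcont.continuousOn ⟨by simpa using hp, hlarge⟩
  exact ⟨a, ha⟩

lemma exists_infDist_add_smul_eq {S : Submodule ℝ E} {p q : E} {c : ℝ}
    (hp : infDist p (S : Set E) ≤ c) (hq : 0 < infDist q (S : Set E)) :
    ∃ a : ℝ, infDist (p + a • q) (S : Set E) = c := by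
  simp only [← norm_mkQ_eq_infDist_s6, map_add, map_smul] at hp hq ⊢
  exact exists_norm_add_smul_eq_s6 hp hq

end Distance

section Compactness

lemma totallyBounded_of_subset_thickening {α : Type*} [PseudoMetricSpace α] {s : Set α}
    (h : ∀ ε > 0, ∃ t, TotallyBounded t ∧ s ⊆ thickening ε t) : TotallyBounded s := by
  refine Metric.totallyBounded_iff.2 fun ε hε => ?_
  obtain ⟨t, ht, hst⟩ := h (ε / 2) (half_pos hε)
  obtain ⟨u, hu, htu⟩ := Metric.totallyBounded_iff.1 ht (ε / 2) (half_pos hε)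
  refine ⟨u, hu, fun x hx => ?_⟩
  obtain ⟨y, hy, hxy⟩ := mem_thickening_iff.1 (hst hx)
  obtain ⟨z, hz, hyz⟩ := Set.mem_iUnion₂.1 (htu hy)
  have hxz : dist x z < ε := by linarith [mem_ball.1 hyz, dist_triangle x y z]
  exact Set.mem_iUnion₂.2 ⟨z, hz, hxz⟩

lemma totallyBounded_of_forall_exists_infDist_lt (𝕜 : Type*) {E : Type*}
    [NontriviallyNormedField 𝕜] [LocallyCompactSpace 𝕜] [NormedAddCommGroup E] [NormedSpace 𝕜 E]
    {s : Set E} (hs : Bornology.IsBounded s)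
    (h : ∀ ε > 0, ∃ F : Submodule 𝕜 E, FiniteDimensional 𝕜 F ∧
      ∀ x ∈ s, infDist x (F : Set E) < ε) : TotallyBounded s := by
  obtain ⟨R, hR⟩ := hs.exists_norm_le
  refine totallyBounded_of_subset_thickening fun ε hε => ?_
  obtain ⟨F, hF, hsF⟩ := h ε hε
  have : ProperSpace F := FiniteDimensional.proper 𝕜 F
  refine ⟨(↑) '' closedBall (0 : F) (R + ε),
    ((isCompact_closedBall _ _).image continuous_subtype_val).totallyBounded, fun x hx => ?_⟩
  obtain ⟨y, hy, hxy⟩ := (infDist_lt_iff F.nonempty).1 (hsF x hx)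
  have hy_norm : ‖y‖ ≤ R + ε := by
    linarith [norm_le_norm_add_norm_sub x y, hR x hx, dist_eq_norm x y]
  exact mem_thickening_iff.2 ⟨y, ⟨⟨y, hy⟩, by simpa using hy_norm, rfl⟩, hxy⟩

lemma exists_tendsto_subseq_of_totallyBounded {α : Type*} [PseudoMetricSpace α] [CompleteSpace α]
    {s : Set α} (hs : TotallyBounded s) {x : ℕ → α} (hx : ∀ n, x n ∈ s) :
    ∃ z, ∃ φ : ℕ → ℕ, StrictMono φ ∧ Tendsto (x ∘ φ) atTop (nhds z) := by
  have hcompact : IsCompact (closure s) := hs.closure.isCompact_of_isClosed isClosed_closure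
  obtain ⟨z, -, hz⟩ := hcompact.tendsto_subseq fun n => subset_closure (hx n)
  exact ⟨z, hz⟩

end Compactness

section PartialSolution

lemma mem_span_image_Ici {R M : Type*} [Semiring R] [AddCommMonoid M] [Module R M] (q : ℕ → M)
    (j : ℕ) : q j ∈ Submodule.span R (q '' Set.Ici j) :=
  Submodule.subset_span (Set.mem_image_of_mem q Set.self_mem_Ici)

lemma add_smul_mem_span_image_Ici {R M : Type*} [Semiring R] [AddCommMonoid M] [Module R M]
    {q : ℕ → M} {j : ℕ} {p : M} (hp : p ∈ Submodule.span R (q '' Set.Ici (j + 1))) (a : R) :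
    p + a • q j ∈ Submodule.span R (q '' Set.Ici j) :=
  add_mem (Submodule.span_mono (Set.image_mono (Set.Ici_subset_Ici.2 j.le_succ)) hp)
    (Submodule.smul_mem _ a (mem_span_image_Ici q j))

/-- `p` is a solution of the distance problem between the stages `j` and `k`: a linear combination
of `q j, q (j + 1), …` whose distance to `Y n` is `d (n + 1)` for `j ≤ n < k`. The last field keeps
`p` close to finite-dimensional subspaces independent of `k`; for `n = j` it says `‖p‖ ≤ d j`. -/
structure IsPartialSolution {X : Type*} [SeminormedAddCommGroup X] [NormedSpace ℝ X]
    (Y : ℕ → Submodule ℝ X) (d : ℕ → ℝ) (q : ℕ → X) (j k : ℕ) (p : X) : Prop where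
  mem_span : p ∈ Submodule.span ℝ (q '' Set.Ici j)
  infDist_eq : ∀ n, j ≤ n → n < k → infDist p (Y n : Set X) = d (n + 1)
  infDist_span_le : ∀ n, j ≤ n → infDist p (Submodule.span ℝ (q '' Set.Ico j n) : Set X) ≤ d n

namespace IsPartialSolution

section Seminormed

variable {X : Type*} [SeminormedAddCommGroup X] [NormedSpace ℝ X] {Y : ℕ → Submodule ℝ X}
  {d : ℕ → ℝ} {q : ℕ → X} {j k : ℕ} {p : X}

lemma norm_le (hp : IsPartialSolution Y d q j k p) : ‖p‖ ≤ d j := by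
  simpa using hp.infDist_span_le j le_rfl

lemma zero (hd : ∀ n, 0 ≤ d n) : IsPartialSolution Y d q k k 0 where
  mem_span := Submodule.zero_mem _
  infDist_eq _ hkn hnk := absurd hnk hkn.not_gt
  infDist_span_le n _ := (infDist_zero_of_mem (Submodule.zero_mem _)).trans_le (hd n)

lemma add_smul (hp : IsPartialSolution Y d q (j + 1) k p) (hqY : ∀ n > j, q j ∈ Y n) {a : ℝ}
    (hdist : infDist (p + a • q j) (Y j : Set X) = d (j + 1)) (hnorm : ‖p + a • q j‖ ≤ d j) :
    IsPartialSolution Y d q j k (p + a • q j) where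
  mem_span := add_smul_mem_span_image_Ici hp.mem_span a
  infDist_eq n hjn hnk := by
    rcases hjn.eq_or_lt with rfl | hjn
    · exact hdist
    · rw [infDist_add_of_mem_s6 (Submodule.smul_mem _ a (hqY n hjn)), hp.infDist_eq n hjn hnk]
  infDist_span_le n hjn := by
    rcases hjn.eq_or_lt with rfl | hjn
    · simpa using hnorm
    · have hq : q j ∈ Submodule.span ℝ (q '' Set.Ico j n) :=
        Submodule.subset_span (Set.mem_image_of_mem q (Set.left_mem_Ico.2 hjn))
      rw [infDist_add_of_mem_s6 (Submodule.smul_mem _ a hq)]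
      exact (infDist_le_infDist_of_subset
        (Submodule.span_mono (Set.image_mono (Set.Ico_subset_Ico_left j.le_succ)))
        (Submodule.nonempty _)).trans (hp.infDist_span_le n hjn)

lemma exists_add_smul (hp : IsPartialSolution Y d q (j + 1) k p) (hd : 0 < d (j + 1))
    (hqY : ∀ n > j, q j ∈ Y n) (hq : 0 < ‖q j‖)
    (hineq : ∀ v ∈ Submodule.span ℝ (q '' Set.Ici j),
      d (j + 1) * ‖v‖ ≤ d j * infDist v (Y j : Set X)) :
    ∃ a : ℝ, IsPartialSolution Y d q j k (p + a • q j) := by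
  have hq_dist : 0 < infDist (q j) (Y j : Set X) :=
    infDist_nonneg.lt_of_ne' (right_ne_zero_of_mul
      ((mul_pos hd hq).trans_le (hineq _ (mem_span_image_Ici q j))).ne')
  have hp_dist : infDist p (Y j : Set X) ≤ d (j + 1) :=
    (infDist_le_dist_of_mem (Y j).zero_mem).trans (by simpa using hp.norm_le)
  obtain ⟨a, ha⟩ := exists_infDist_add_smul_eq hp_dist hq_dist
  have hnorm : ‖p + a • q j‖ ≤ d j := by
    have h := hineq _ (add_smul_mem_span_image_Ici hp.mem_span a)
    rw [ha, mul_comm] at h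
    exact le_of_mul_le_mul_right h hd
  exact ⟨a, hp.add_smul hqY ha hnorm⟩

lemma exists_of_le (hd : ∀ n, 0 < d n) (hqY : ∀ i, ∀ n > i, q i ∈ Y n) (hq : ∀ i, 0 < ‖q i‖)
    (hineq : ∀ i, ∀ v ∈ Submodule.span ℝ (q '' Set.Ici i),
      d (i + 1) * ‖v‖ ≤ d i * infDist v (Y i : Set X)) (hjk : j ≤ k) :
    ∃ p, IsPartialSolution Y d q j k p := by
  induction hjk using Nat.decreasingInduction with
  | self => exact ⟨0, zero fun n => (hd n).le⟩
  | of_succ i _ ih =>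
    obtain ⟨p, hp⟩ := ih
    obtain ⟨a, ha⟩ := hp.exists_add_smul (hd _) (hqY i) (hq i) (hineq i)
    exact ⟨_, ha⟩

end Seminormed

lemma totallyBounded_setOf {X : Type*} [NormedAddCommGroup X] [NormedSpace ℝ X]
    {Y : ℕ → Submodule ℝ X} {d : ℕ → ℝ} {q : ℕ → X} (hd : Tendsto d atTop (nhds 0)) (j : ℕ) :
    TotallyBounded {p | ∃ k, IsPartialSolution Y d q j k p} := by
  have hbdd : Bornology.IsBounded {p | ∃ k, IsPartialSolution Y d q j k p} :=
    isBounded_iff_forall_norm_le.2 ⟨d j, fun _ ⟨_, hp⟩ => hp.norm_le⟩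
  refine totallyBounded_of_forall_exists_infDist_lt ℝ hbdd fun ε hε => ?_
  obtain ⟨n, hn, hjn⟩ := ((hd.eventually_lt_const hε).and (eventually_ge_atTop j)).exists
  exact ⟨Submodule.span ℝ (q '' Set.Ico j n),
    FiniteDimensional.span_of_finite ℝ ((Set.finite_Ico j n).image q),
    fun _ ⟨_, hp⟩ => (hp.infDist_span_le n hjn).trans_lt hn⟩

end IsPartialSolution

end PartialSolution

/-- Borodin's second theorem: here `Y j`, `q j` denote the paper's `Y_{j+1}`, `q_{j+1}`, and
`d j` denotes the paper's `d_j` (so `d 0 = d₀`). If `q j ∈ Y (j+1) \ Y j` and every non-zero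
`p` in the span of `{q i : i ≥ j}` satisfies `‖p‖ ≤ (d j / d (j+1)) · ρ(p, Y j)`, then some
`x` in the closed linear span of the `q`'s satisfies `ρ(x, Y n) = d (n+1)` for all `n`. -/
theorem stmt_6 (X : Type*) [NormedAddCommGroup X] [NormedSpace ℝ X] [CompleteSpace X]
    (hinf : ¬ FiniteDimensional ℝ X)
    (Y : ℕ → Submodule ℝ X) (hnested : ∀ n, Y n < Y (n + 1))
    (d : ℕ → ℝ) (hanti : Antitone d) (hpos : ∀ n, 0 < d n)
    (hlim : Tendsto d atTop (nhds 0))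
    (q : ℕ → X) (hq0 : ∀ n, q n ≠ 0) (hqmem : ∀ n, q n ∈ Y (n + 1)) (hqnot : ∀ n, q n ∉ Y n)
    (hineq : ∀ j : ℕ, ∀ p ∈ Submodule.span ℝ {x : X | ∃ i, j ≤ i ∧ q i = x}, p ≠ 0 →
      ‖p‖ ≤ (d j / d (j + 1)) * infDist p (Y j : Set X)) :
    ∃ x ∈ closure (Submodule.span ℝ (Set.range q) : Set X),
      ∀ n, infDist x (Y n : Set X) = d (n + 1) := by
  have hmono : Monotone Y := monotone_nat_of_le_succ fun n => (hnested n).le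
  have hmul : ∀ j, ∀ v ∈ Submodule.span ℝ (q '' Set.Ici j),
      d (j + 1) * ‖v‖ ≤ d j * infDist v (Y j : Set X) := by
    intro j v hv
    rcases eq_or_ne v 0 with rfl | hv₀
    · simpa using mul_nonneg (hpos j).le infDist_nonneg
    · rw [mul_comm, ← le_div_iff₀ (hpos _), ← div_mul_eq_mul_div]
      exact hineq j v hv hv₀
  choose x hx using fun k => IsPartialSolution.exists_of_le (k := k) hpos
    (fun i n hin => hmono hin (hqmem i)) (fun i => norm_pos_iff.2 (hq0 i)) hmul k.zero_le
  obtain ⟨z, φ, hφ, hz⟩ := exists_tendsto_subseq_of_totallyBounded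
    (IsPartialSolution.totallyBounded_setOf hlim 0) fun k => ⟨k, hx k⟩
  refine ⟨z, mem_closure_of_tendsto hz (.of_forall fun k =>
    Submodule.span_mono (Set.image_subset_range _ _) (hx (φ k)).mem_span), fun n => ?_⟩
  have hdist : ∀ᶠ k in atTop, infDist (x (φ k)) (Y n : Set X) = d (n + 1) :=
    (hφ.tendsto_atTop.eventually_gt_atTop n).mono fun k hk =>
      (hx (φ k)).infDist_eq n n.zero_le hk
  exact tendsto_nhds_unique_of_eventuallyEq
    (((continuous_infDist_pt _).tendsto z).comp hz) tendsto_const_nhds hdist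
end

section
/- Let X be a reflexive Banach space, let Y be a closed subspace of X, and let Z be a subspace of X with Y ⊂ Z and Y ≠ Z. Then there exists an element y ∈ Z with y ∉ Y such that ρ(y, Y) = ‖y‖. -/
open Metric Filter

/-!
The key fact is that every closed subspace `Y` of a reflexive space contains a nearest point to each
`x`. Functionals vanishing on `Y` satisfy `‖f x‖ ≤ ‖f‖ * infDist x Y`, so evaluation at `x`,
restricted to the annihilator of `Y`, extends by Hahn–Banach to an element of the double dual of
norm at most `infDist x Y`. By reflexivity the extension is evaluation at some `w`. Every
functional vanishing on `Y` takes the same value at `w` and `x`, so `x - w ∈ Y`, and this is the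
nearest point. For `z ∈ Z \ Y` with nearest point `y ∈ Y`, the vector `z - y` is as required.
-/

open StrongDual NormedSpace

theorem infDist_sub_of_mem {E : Type*} [SeminormedAddCommGroup E] (S : AddSubgroup E) (x : E)
    {y : E} (hy : y ∈ S) : infDist (x - y) (S : Set E) = infDist x (S : Set E) := by
  have same_coset : ((x - y : E) : E ⧸ S) = x := by
    rw [QuotientAddGroup.mk_sub, (QuotientAddGroup.eq_zero_iff y).2 hy, sub_zero]
  rw [← QuotientAddGroup.norm_mk, ← QuotientAddGroup.norm_mk, same_coset]

theorem norm_apply_le_opNorm_mul_infDist {𝕜 E : Type*} [NontriviallyNormedField 𝕜]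
    [SeminormedAddCommGroup E] [NormedSpace 𝕜 E] {Y : Submodule 𝕜 E} {f : StrongDual 𝕜 E}
    (hf : f ∈ polarSubmodule 𝕜 Y) (x : E) : ‖f x‖ ≤ ‖f‖ * infDist x (Y : Set E) := by
  rw [infDist_eq_iInf, Real.mul_iInf_of_nonneg (norm_nonneg f)]
  refine le_ciInf fun y => ?_
  calc ‖f x‖ = ‖f (x - y)‖ := by rw [map_sub, (mem_polarSubmodule 𝕜 Y f).1 hf y y.2, sub_zero]
    _ ≤ ‖f‖ * ‖x - y‖ := f.le_opNorm _
    _ = ‖f‖ * dist x y := by rw [dist_eq_norm]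

section RCLike

variable {𝕜 X : Type*} [RCLike 𝕜] [SeminormedAddCommGroup X] [NormedSpace 𝕜 X]

theorem mem_iff_forall_mem_polarSubmodule_apply_eq_zero {Y : Submodule 𝕜 X}
    (hY : IsClosed (Y : Set X)) {x : X} : x ∈ Y ↔ ∀ f ∈ polarSubmodule 𝕜 Y, f x = 0 := by
  refine ⟨fun hx f hf => (mem_polarSubmodule 𝕜 Y f).1 hf x hx, fun h => ?_⟩
  -- Closedness makes `X ⧸ Y` a normed space, so its dual separates points.
  rw [← Submodule.Quotient.mk_eq_zero, SeparatingDual.eq_zero_iff_forall_dual_eq_zero (R := 𝕜)]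
  intro g
  refine h (g ∘L Y.mkQL) ((mem_polarSubmodule 𝕜 Y _).2 fun y hy => ?_)
  simp [(Submodule.Quotient.mk_eq_zero Y).2 hy]

theorem exists_doubleDual_norm_le_infDist (Y : Submodule 𝕜 X) (x : X) :
    ∃ Φ : StrongDual 𝕜 (StrongDual 𝕜 X),
      (∀ f ∈ polarSubmodule 𝕜 Y, Φ f = f x) ∧ ‖Φ‖ ≤ infDist x (Y : Set X) := by
  obtain ⟨Φ, extends_eval, norm_eq⟩ := exists_extension_norm_eq (polarSubmodule 𝕜 Y)
    (inclusionInDoubleDual 𝕜 X x ∘L (polarSubmodule 𝕜 Y).subtypeL)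
  refine ⟨Φ, fun f hf => extends_eval ⟨f, hf⟩, ?_⟩
  rw [norm_eq]
  refine ContinuousLinearMap.opNorm_le_bound _ infDist_nonneg fun f => ?_
  exact (norm_apply_le_opNorm_mul_infDist f.2 x).trans_eq (mul_comm _ _)

theorem exists_mem_infDist_eq_dist_of_reflexive
    (hrefl : Function.Surjective (inclusionInDoubleDual 𝕜 X)) {Y : Submodule 𝕜 X}
    (hY : IsClosed (Y : Set X)) (x : X) : ∃ y ∈ Y, infDist x (Y : Set X) = dist x y := by
  obtain ⟨Φ, hΦ, norm_le⟩ := exists_doubleDual_norm_le_infDist Y x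
  obtain ⟨w, rfl⟩ := hrefl Φ
  have sub_mem : x - w ∈ Y := by
    refine (mem_iff_forall_mem_polarSubmodule_apply_eq_zero hY).2 fun f hf => ?_
    rw [map_sub, ← hΦ f hf, dual_def, sub_self]
  refine ⟨x - w, sub_mem, le_antisymm (infDist_le_dist_of_mem sub_mem) ?_⟩
  calc dist x (x - w) = ‖w‖ := dist_self_sub_right x w
    _ = ‖inclusionInDoubleDual 𝕜 X w‖ := ((inclusionInDoubleDualLi 𝕜).norm_map w).symm
    _ ≤ infDist x (Y : Set X) := norm_le

theorem stmt_8_general (hrefl : Function.Surjective (inclusionInDoubleDual 𝕜 X))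
    {Y Z : Submodule 𝕜 X} (hclosed : IsClosed (Y : Set X)) (hYZ : Y < Z) :
    ∃ y ∈ Z, y ∉ Y ∧ infDist y (Y : Set X) = ‖y‖ := by
  obtain ⟨z, hzZ, hzY⟩ := SetLike.exists_of_lt hYZ
  obtain ⟨y, hyY, nearest⟩ := exists_mem_infDist_eq_dist_of_reflexive hrefl hclosed z
  refine ⟨z - y, Z.sub_mem hzZ (hYZ.le hyY), fun h => hzY ((Y.sub_mem_iff_left hyY).1 h), ?_⟩
  calc infDist (z - y) (Y : Set X) = infDist z (Y : Set X) :=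
        infDist_sub_of_mem Y.toAddSubgroup z hyY
    _ = ‖z - y‖ := by rw [nearest, dist_eq_norm]

end RCLike

/-- In a reflexive Banach space, if `Y` is a closed subspace strictly contained in a
subspace `Z`, then there is `y ∈ Z \ Y` with `ρ(y, Y) = ‖y‖`. -/
theorem stmt_8 (X : Type*) [NormedAddCommGroup X] [NormedSpace ℝ X] [CompleteSpace X]
    (hrefl : Function.Surjective (NormedSpace.inclusionInDoubleDual ℝ X))
    (Y Z : Submodule ℝ X) (hclosed : IsClosed (Y : Set X))
    (hYZ : Y ≤ Z) (hne : Y ≠ Z) :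
    ∃ y ∈ Z, y ∉ Y ∧ infDist y (Y : Set X) = ‖y‖ :=
  stmt_8_general hrefl hclosed (lt_of_le_of_ne hYZ hne)
end

section
/- Let X be a reflexive Banach space. Then X has property (B_f): for every countable sequence of closed distinct subspaces {0} = Y₀ ⊂ Y₁ ⊂ ⋯ ⊂ Yₙ ⊂ ⋯ ⊂ X (with Yₙ ≠ Yₙ₊₁ for all n), every N ≥ 1, and every non-increasing sequence of non-negative numbers e₀ ≥ e₁ ≥ ⋯ ≥ e_N, there exists x ∈ X such that ρ(x, Yₙ) = eₙ for n = 0, 1, …, N and ρ(x, Yₙ) = 0 for all n ≥ N + 1. -/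
open Metric Filter

/-! Bounded closed convex subsets of a reflexive space are weakly compact and the norm is weakly
lower semicontinuous, so closed subspaces have nearest points. If `y` is a point of `Y (n + 1)`
nearest to `x`, then `ρ(x - y, Y n) ≤ ‖x - y‖ = ρ(x, Y (n + 1)) ≤ e n`. Moving `x - y` along a
vector of `Y (n + 1)` outside `Y n` raises the distance to `Y n` to exactly `e n`, by the
intermediate value theorem, and leaves the distances to all later subspaces alone. Start from `0`
and descend along the chain. -/

section Proximinal

variable {α : Type*}

/-- A set is proximinal if every point has a nearest point in it. -/
def IsProximinal [PseudoMetricSpace α] (s : Set α) : Prop :=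
  ∀ x, ∃ y ∈ s, infDist x s = dist x y

theorem IsProximinal.isClosed [MetricSpace α] {s : Set α} (hs : IsProximinal s) : IsClosed s := by
  refine isClosed_of_closure_subset fun x hx ↦ ?_
  obtain ⟨y, hy, hxy⟩ := hs x
  rw [infDist_zero_of_mem_closure hx] at hxy
  rwa [dist_eq_zero.mp hxy.symm]

end Proximinal

section WeakTopology

variable {𝕜 E : Type*} [RCLike 𝕜] [NormedAddCommGroup E] [NormedSpace 𝕜 E] [NormedSpace ℝ E]
  [IsScalarTower ℝ 𝕜 E]

theorem isClosed_toWeakSpace_image_of_convex {s : Set E} (hconv : Convex ℝ s) (hs : IsClosed s) :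
    IsClosed (toWeakSpace 𝕜 E '' s) := by
  rw [← hs.closure_eq, hconv.toWeakSpace_closure 𝕜]
  exact isClosed_closure

theorem isCompact_toWeakSpace_image_of_surjective_inclusionInDoubleDual
    (hrefl : Function.Surjective (NormedSpace.inclusionInDoubleDual 𝕜 E)) {s : Set E}
    (hconv : Convex ℝ s) (hs : IsClosed s) (hbdd : Bornology.IsBounded s) :
    IsCompact (toWeakSpace 𝕜 E '' s) := by
  have hsurj : Function.Surjective (NormedSpace.inclusionInDoubleDualWeak 𝕜 E) := hrefl
  rw [← (isClosed_toWeakSpace_image_of_convex hconv hs).closure_eq]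
  refine NormedSpace.isCompact_closure_of_isBounded 𝕜 E _ ?_ (by simp [hsurj.range_eq])
  rwa [Set.preimage_image_eq _ (toWeakSpace 𝕜 E).injective]

theorem lowerSemicontinuous_dist_toWeakSpace_symm (x : E) :
    LowerSemicontinuous fun y ↦ dist x ((toWeakSpace 𝕜 E).symm y) := by
  refine lowerSemicontinuous_iff_isClosed_preimage.mpr fun r ↦ ?_
  convert isClosed_toWeakSpace_image_of_convex (𝕜 := 𝕜) (convex_closedBall x r) isClosed_closedBall
  ext y
  simp [LinearEquiv.image_eq_preimage_symm, dist_comm x]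

theorem isProximinal_of_surjective_inclusionInDoubleDual
    (hrefl : Function.Surjective (NormedSpace.inclusionInDoubleDual 𝕜 E)) {s : Set E}
    (hconv : Convex ℝ s) (hs : IsClosed s) (hne : s.Nonempty) : IsProximinal s := by
  intro x
  obtain ⟨z, hz⟩ := hne
  let t := s ∩ closedBall x (dist z x)
  have hzt : z ∈ t := ⟨hz, mem_closedBall.mpr le_rfl⟩
  have ht : IsCompact (toWeakSpace 𝕜 E '' t) :=
    isCompact_toWeakSpace_image_of_surjective_inclusionInDoubleDual hrefl
      (hconv.inter (convex_closedBall x _)) (hs.inter isClosed_closedBall)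
      (isBounded_closedBall.subset Set.inter_subset_right)
  obtain ⟨_, ⟨y, hy, rfl⟩, hmin⟩ :=
    (lowerSemicontinuous_dist_toWeakSpace_symm x).lowerSemicontinuousOn _ |>.exists_isMinOn
      (Set.Nonempty.image _ ⟨z, hzt⟩) ht
  refine ⟨y, hy.1, (infDist_le_dist_of_mem hy.1).antisymm ?_⟩
  rw [← infDist_inter_closedBall_of_mem hz, le_infDist ⟨z, hzt⟩]
  intro w hw
  simpa using hmin (Set.mem_image_of_mem _ hw)

end WeakTopology

section DistanceToSubmodule

theorem norm_submoduleQuotient_mk {R M : Type*} [Ring R] [SeminormedAddCommGroup M] [Module R M]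
    (S : Submodule R M) (x : M) : ‖(Submodule.Quotient.mk x : M ⧸ S)‖ = infDist x (S : Set M) :=
  QuotientAddGroup.norm_mk x

theorem infDist_eq_of_sub_mem {R M : Type*} [Ring R] [SeminormedAddCommGroup M] [Module R M]
    {S : Submodule R M} {x y : M} (h : x - y ∈ S) :
    infDist x (S : Set M) = infDist y (S : Set M) := by
  rw [← norm_submoduleQuotient_mk, ← norm_submoduleQuotient_mk, (Submodule.Quotient.eq S).mpr h]

variable {𝕜 E : Type*} [RCLike 𝕜]

theorem exists_norm_add_smul_eq_s10 [SeminormedAddCommGroup E] [NormedSpace 𝕜 E] {w z : E} {c : ℝ}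
    (hz : ‖z‖ ≠ 0) (hc : ‖w‖ ≤ c) : ∃ t : 𝕜, ‖w + t • z‖ = c := by
  have hcont : Continuous fun t : ℝ ↦ ‖w + (t : 𝕜) • z‖ := by fun_prop
  have hlower (t : ℝ) : t * ‖z‖ - ‖w‖ ≤ ‖w + (t : 𝕜) • z‖ := by
    have := norm_sub_le_norm_add ((t : 𝕜) • z) w
    rw [norm_smul, RCLike.norm_ofReal, add_comm] at this
    grw [← this, ← le_abs_self t]
  let T := (c + ‖w‖) / ‖z‖
  have hT : c ≤ ‖w + (T : 𝕜) • z‖ := by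
    simpa [T, div_mul_cancel₀ _ hz] using hlower T
  obtain ⟨t, ht⟩ := mem_range_of_exists_le_of_exists_ge hcont ⟨0, by simpa using hc⟩ ⟨T, hT⟩
  exact ⟨t, ht⟩

variable [NormedAddCommGroup E] [NormedSpace 𝕜 E]

theorem exists_sub_mem_infDist_eq {S T : Submodule 𝕜 E} (hlt : S < T)
    (hS : IsClosed (S : Set E)) (hT : IsProximinal (T : Set E)) {x : E} {c : ℝ}
    (hc : infDist x (T : Set E) ≤ c) : ∃ x', x' - x ∈ T ∧ infDist x' (S : Set E) = c := by
  obtain ⟨y, hyT, hxy⟩ := hT x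
  obtain ⟨z, hzT, hzS⟩ := SetLike.exists_of_lt hlt
  have hz : ‖(Submodule.Quotient.mk z : E ⧸ S)‖ ≠ 0 := by
    rw [norm_submoduleQuotient_mk]
    exact ((hS.notMem_iff_infDist_pos S.nonempty).mp hzS).ne'
  have hle : ‖(Submodule.Quotient.mk (x - y) : E ⧸ S)‖ ≤ c :=
    calc ‖(Submodule.Quotient.mk (x - y) : E ⧸ S)‖
      _ ≤ ‖x - y‖ := Submodule.Quotient.norm_mk_le S _
      _ = infDist x (T : Set E) := by rw [hxy, dist_eq_norm]
      _ ≤ c := hc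
  obtain ⟨t, ht⟩ := exists_norm_add_smul_eq_s10 (𝕜 := 𝕜) hz hle
  refine ⟨x - y + t • z, ?_, ?_⟩
  · rw [show x - y + t • z - x = t • z - y by abel]
    exact T.sub_mem (T.smul_mem t hzT) hyT
  · rwa [← norm_submoduleQuotient_mk, Submodule.Quotient.mk_add, Submodule.Quotient.mk_smul]

theorem exists_forall_infDist_eq_of_antitone {Y : ℕ → Submodule 𝕜 E} (hY : StrictMono Y)
    (hprox : ∀ n, IsProximinal (Y n : Set E)) {e : ℕ → ℝ} (he : Antitone e) {m : ℕ}
    (hzero : ∀ n ≥ m, e n = 0) : ∃ x : E, ∀ n, infDist x (Y n : Set E) = e n := by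
  induction m generalizing Y e with
  | zero => exact ⟨0, fun n ↦ by rw [hzero n n.zero_le, infDist_zero_of_mem (Y n).zero_mem]⟩
  | succ m ih =>
    obtain ⟨x, hx⟩ := ih (Y := fun n ↦ Y (n + 1)) (e := fun n ↦ e (n + 1))
      (fun _ _ h ↦ hY (by gcongr)) (fun n ↦ hprox (n + 1)) (fun _ _ h ↦ he (by gcongr))
      (fun n hn ↦ hzero (n + 1) (by gcongr))
    have hle : infDist x (Y 1 : Set E) ≤ e 0 := (hx 0).trans_le (he zero_le_one)
    obtain ⟨x', hx'x, hx'⟩ :=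
      exists_sub_mem_infDist_eq (hY zero_lt_one) (hprox 0).isClosed (hprox 1) hle
    refine ⟨x', fun n ↦ ?_⟩
    cases n with
    | zero => exact hx'
    | succ n =>
      have hmem : x' - x ∈ Y (n + 1) := hY.monotone (Nat.le_add_left 1 n) hx'x
      rw [infDist_eq_of_sub_mem hmem, hx n]

end DistanceToSubmodule

theorem stmt_10_general {𝕜 X : Type*} [RCLike 𝕜] [NormedAddCommGroup X] [NormedSpace 𝕜 X]
    (Y : ℕ → Submodule 𝕜 X) (hprox : ∀ n, IsProximinal (Y n : Set X)) (hY : StrictMono Y)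
    (N : ℕ) (e : ℕ → ℝ) (hnonneg : 0 ≤ e N) (hmono : ∀ n < N, e (n + 1) ≤ e n) :
    ∃ x : X, (∀ n ≤ N, infDist x (Y n : Set X) = e n) ∧
      ∀ n > N, infDist x (Y n : Set X) = 0 := by
  let e' : ℕ → ℝ := fun n ↦ if n ≤ N then e n else 0
  have he'_of_le {n : ℕ} (hn : n ≤ N) : e' n = e n := if_pos hn
  have he'_of_gt {n : ℕ} (hn : n > N) : e' n = 0 := if_neg hn.not_ge
  have he' : Antitone e' := by
    refine antitone_nat_of_succ_le fun n ↦ ?_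
    rcases lt_trichotomy n N with hn | rfl | hn
    · rw [he'_of_le hn, he'_of_le hn.le]
      exact hmono n hn
    · rwa [he'_of_gt n.lt_succ_self, he'_of_le le_rfl]
    · rw [he'_of_gt hn, he'_of_gt (hn.trans n.lt_succ_self)]
  obtain ⟨x, hx⟩ := exists_forall_infDist_eq_of_antitone hY hprox he' fun n hn ↦ he'_of_gt hn
  exact ⟨x, fun n hn ↦ (hx n).trans (he'_of_le hn), fun n hn ↦ (hx n).trans (he'_of_gt hn)⟩

/-- A reflexive Banach space has property (B_f). -/
theorem stmt_10 (X : Type*) [NormedAddCommGroup X] [NormedSpace ℝ X] [CompleteSpace X]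
    (hrefl : Function.Surjective (NormedSpace.inclusionInDoubleDual ℝ X))
    (Y : ℕ → Submodule ℝ X) (hclosed : ∀ n, IsClosed (Y n : Set X)) (hY0 : Y 0 = ⊥)
    (hnested : ∀ n, Y n < Y (n + 1))
    (N : ℕ) (hN : 1 ≤ N) (e : ℕ → ℝ) (hnonneg : ∀ n ≤ N, 0 ≤ e n)
    (hmono : ∀ n < N, e (n + 1) ≤ e n) :
    ∃ x : X, (∀ n ≤ N, infDist x (Y n : Set X) = e n) ∧
      ∀ n > N, infDist x (Y n : Set X) = 0 :=
  stmt_10_general Y (fun n ↦ isProximinal_of_surjective_inclusionInDoubleDual hrefl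
    (Y n).convex (hclosed n) (Y n).nonempty) (strictMono_nat_of_lt_succ hnested) N e
    (hnonneg N le_rfl) hmono
end

section
/- Let X be a normed linear space, Q a subspace of X, x₁ ∈ X with ρ(x₁, Q) > 0, and x₂ ∈ X. Then the function a ↦ a − ρ(x₂ − a·x₁, Q)/ρ(x₁, Q), defined for a ∈ ℝ, is non-decreasing and satisfies |a − ρ(x₂ − a·x₁, Q)/ρ(x₁, Q)| ≤ ρ(x₂, Q)/ρ(x₁, Q) for all a ≥ 0; in particular the limit lim_{a→+∞} (a − ρ(x₂ − a·x₁, Q)/ρ(x₁, Q)) exists and is finite. -/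
open Metric Filter

/-!
The distance `ρ(x, Q)` is the seminorm of the class of `x` in `X ⧸ Q`, so everything reduces to two
vectors `u`, `v` of a seminormed space. There the triangle inequality says that `a ↦ ‖v - a • u‖` is
`‖u‖`-Lipschitz, whence `a ↦ a * ‖u‖ - ‖v - a • u‖` is monotone, and that `a * ‖u‖ = ‖a • u‖` and
`‖v - a • u‖` differ by at most `‖v‖` when `0 ≤ a`. Dividing by `‖u‖` gives the normalized function,
and a monotone function bounded above converges.
-/

section SeminormedSpace

variable {E : Type*} [SeminormedAddCommGroup E] [NormedSpace ℝ E]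

theorem monotone_mul_norm_sub_norm_sub_smul (u v : E) :
    Monotone fun a : ℝ => a * ‖u‖ - ‖v - a • u‖ := by
  intro a b hab
  have norm_le : ‖v - b • u‖ ≤ ‖v - a • u‖ + (b - a) * ‖u‖ :=
    calc ‖v - b • u‖ = ‖(v - a • u) - (b - a) • u‖ := by congr 1; module
      _ ≤ ‖v - a • u‖ + ‖(b - a) • u‖ := norm_sub_le _ _
      _ = ‖v - a • u‖ + (b - a) * ‖u‖ := by rw [norm_smul_of_nonneg (sub_nonneg.2 hab)]
  dsimp only
  linarith

theorem abs_mul_norm_sub_norm_sub_smul_le (u v : E) {a : ℝ} (ha : 0 ≤ a) :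
    |a * ‖u‖ - ‖v - a • u‖| ≤ ‖v‖ :=
  calc |a * ‖u‖ - ‖v - a • u‖| = |‖a • u‖ - ‖a • u - v‖| := by
        rw [norm_smul_of_nonneg ha, norm_sub_rev v]
    _ ≤ ‖a • u - (a • u - v)‖ := abs_norm_sub_norm_le _ _
    _ = ‖v‖ := by rw [sub_sub_cancel]

theorem monotone_sub_norm_sub_smul_div_norm {u : E} (hu : ‖u‖ ≠ 0) (v : E) :
    Monotone fun a : ℝ => a - ‖v - a • u‖ / ‖u‖ := by
  simp only [sub_div' hu]
  exact (monotone_mul_norm_sub_norm_sub_smul u v).div_const (norm_nonneg u)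

theorem abs_sub_norm_sub_smul_div_norm_le {u : E} (hu : ‖u‖ ≠ 0) (v : E) {a : ℝ} (ha : 0 ≤ a) :
    |a - ‖v - a • u‖ / ‖u‖| ≤ ‖v‖ / ‖u‖ := by
  rw [sub_div' hu, abs_div, abs_norm]
  gcongr
  exact abs_mul_norm_sub_norm_sub_smul_le u v ha

end SeminormedSpace

theorem infDist_submodule_eq_norm_mk {R M : Type*} [Ring R] [SeminormedAddCommGroup M] [Module R M]
    (S : Submodule R M) (x : M) :
    infDist x (S : Set M) = ‖(Submodule.Quotient.mk x : M ⧸ S)‖ :=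
  (QuotientAddGroup.norm_mk (S := S.toAddSubgroup) x).symm

theorem exists_tendsto_atTop_nhds_of_monotone_of_frequently_le {α β : Type*} [Preorder α]
    [ConditionallyCompleteLinearOrder β] [NoMaxOrder β] [TopologicalSpace β] [OrderTopology β]
    {f : α → β} (hf : Monotone f) {C : β} (hC : ∃ᶠ a in atTop, f a ≤ C) :
    ∃ L, Tendsto f atTop (nhds L) :=
  (tendsto_atTop_of_monotone hf).resolve_left fun f_atTop =>
    hC ((f_atTop.eventually_gt_atTop C).mono fun _ => not_le_of_gt)

theorem stmt_18_general {X : Type*} [SeminormedAddCommGroup X] [NormedSpace ℝ X]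
    (Q : Submodule ℝ X) (x₁ x₂ : X) (h₁ : 0 < infDist x₁ (Q : Set X)) :
    Monotone (fun a : ℝ => a - infDist (x₂ - a • x₁) (Q : Set X) / infDist x₁ (Q : Set X)) ∧
    (∀ a : ℝ, 0 ≤ a →
      |a - infDist (x₂ - a • x₁) (Q : Set X) / infDist x₁ (Q : Set X)| ≤
        infDist x₂ (Q : Set X) / infDist x₁ (Q : Set X)) ∧
    ∃ L : ℝ, Tendsto
      (fun a : ℝ => a - infDist (x₂ - a • x₁) (Q : Set X) / infDist x₁ (Q : Set X))
      atTop (nhds L) := by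
  simp only [infDist_submodule_eq_norm_mk, Submodule.Quotient.mk_sub,
    Submodule.Quotient.mk_smul] at h₁ ⊢
  have mono := monotone_sub_norm_sub_smul_div_norm h₁.ne' (Submodule.Quotient.mk x₂ : X ⧸ Q)
  have bound (a : ℝ) (ha : 0 ≤ a) :=
    abs_sub_norm_sub_smul_div_norm_le h₁.ne' (Submodule.Quotient.mk x₂ : X ⧸ Q) ha
  have eventually_le := (eventually_ge_atTop 0).mono fun a ha => le_of_abs_le (bound a ha)
  exact ⟨mono, bound,
    exists_tendsto_atTop_nhds_of_monotone_of_frequently_le mono eventually_le.frequently⟩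

/-- If `ρ(x₁, Q) > 0`, the function `a ↦ a - ρ(x₂ - a • x₁, Q) / ρ(x₁, Q)` is non-decreasing
and bounded in absolute value by `ρ(x₂, Q) / ρ(x₁, Q)` for `a ≥ 0`; in particular it has a
finite limit as `a → +∞`. -/
theorem stmt_18 (X : Type*) [NormedAddCommGroup X] [NormedSpace ℝ X]
    (Q : Submodule ℝ X) (x₁ x₂ : X) (h₁ : 0 < infDist x₁ (Q : Set X)) :
    Monotone (fun a : ℝ => a - infDist (x₂ - a • x₁) (Q : Set X) / infDist x₁ (Q : Set X)) ∧
    (∀ a : ℝ, 0 ≤ a →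
      |a - infDist (x₂ - a • x₁) (Q : Set X) / infDist x₁ (Q : Set X)| ≤
        infDist x₂ (Q : Set X) / infDist x₁ (Q : Set X)) ∧
    ∃ L : ℝ, Tendsto
      (fun a : ℝ => a - infDist (x₂ - a • x₁) (Q : Set X) / infDist x₁ (Q : Set X))
      atTop (nhds L) :=
  stmt_18_general Q x₁ x₂ h₁
end
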